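/- arXiv:2406.10055 — 2 statements merged into one kernel-verified Lean document; each statement's English description precedes it below -/
import Mathlib

section
/- Let K be a convex body (compact convex set with nonempty interior) in the Euclidean plane ℝ². Suppose that for all rigid motions φ, ψ of ℝ², whenever the intersection (φ K) ∩ (ψ K) has nonempty interior, this intersection is centrally symmetric (i.e., there is a point c such that the point reflection through c maps the intersection onto itself). Then K is a closed Euclidean disk. -/
open Metric

/-- A set in the plane is centrally symmetric if some point reflection maps it onto itself. -/
def CentrallySymmetric (S : Set (EuclideanSpace ℝ (Fin 2))) : Prop :=
  ∃ c : EuclideanSpace ℝ (Fin 2), S = (fun x => (2 : ℝ) • c - x) '' S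


section High
variable {E : Type*} [NormedAddCommGroup E] [InnerProductSpace ℝ E]

/-- centred hypothesis -/
def HighH (K : Set E) : Prop :=
  ∀ (g : E ≃ₗᵢ[ℝ] E) (a : E), (interior (K ∩ {z | g (z - a) ∈ K})).Nonempty →
    ∃ c : E, ∀ z ∈ K, g (z - a) ∈ K → (2 : ℝ) • c - z ∈ K ∧ g ((2 : ℝ) • c - z - a) ∈ K

lemma high_key {K : Set E} (hconv : Convex ℝ K) (hint0 : (0 : E) ∈ interior K)
    (hsym : ∀ z ∈ K, -z ∈ K) (H : HighH K) (g : E ≃ₗᵢ[ℝ] E) (u x y w : E)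
    (hx : x ∈ K) (hxtop : ∀ z ∈ K, inner ℝ u z ≤ inner ℝ u x)
    (hy : g y ∈ K) (hytop : ∀ z, g z ∈ K → inner ℝ u z ≤ inner ℝ u y)
    (huniq : (∀ z ∈ K, inner ℝ u z = inner ℝ u x → z = x) ∨
      (∀ z, g z ∈ K → inner ℝ u z = inner ℝ u y → z = y))
    (hw : w ∈ K) (hint : g (x - w - y) ∈ interior K) :
    (∀ z ∈ K, g (z - w - y) ∈ K → g (z - x + y) ∈ K) ∧
    (∀ z, g z ∈ K → z - w - y ∈ K → z + x - y ∈ K) := by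
  have hne : (interior (K ∩ {z | g (z - (w + y)) ∈ K})).Nonempty := by
    have hxc : x ∈ closure (interior K) := by
      rw [hconv.closure_interior_eq_closure_of_nonempty_interior ⟨0, hint0⟩]
      exact subset_closure hx
    have hcont : Continuous fun z : E => g (z - (w + y)) := by fun_prop
    have ho : IsOpen ((fun z : E => g (z - (w + y))) ⁻¹' interior K) :=
      isOpen_interior.preimage hcont
    obtain ⟨z, hz1, hz2⟩ := mem_closure_iff.1 hxc _ ho (by
      simpa [sub_sub] using hint)
    refine ⟨z, ?_⟩
    rw [mem_interior]
    exact ⟨_, fun v hv => ⟨interior_subset hv.2,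
      show g (v - (w + y)) ∈ K from interior_subset (s := K) hv.1⟩,
      ho.inter isOpen_interior, hz1, hz2⟩
  obtain ⟨c, hc⟩ := H g (w + y) hne
  have hgneg : ∀ v, g v ∈ K → g (-v) ∈ K := fun v hv => by
    rw [map_neg]; exact hsym _ hv
  have hxs := hc x hx (by
    have := interior_subset hint
    simpa [sub_sub] using this)
  have hws := hc w hw (by
    have := hgneg y hy
    simpa using this)
  have h1 := hytop _ (hgneg _ hxs.2)
  have h2 := hxtop _ hws.1
  have e1 : inner ℝ u (-((2 : ℝ) • c - x - (w + y)))
      = inner ℝ u w + inner ℝ u y + inner ℝ u x - inner ℝ u ((2 : ℝ) • c) := by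
    simp only [inner_neg_right, inner_sub_right, inner_add_right]; ring
  have e2 : inner ℝ u ((2 : ℝ) • c - w) = inner ℝ u ((2 : ℝ) • c) - inner ℝ u w := by
    simp only [inner_sub_right]
  have h2c : (2 : ℝ) • c = x + w := by
    rcases huniq with hu | hu
    · have := hu _ hws.1 (by linarith)
      rw [← this]; abel
    · have := hu _ (hgneg _ hxs.2) (by linarith)
      have h3 : (2 : ℝ) • c = x + w + y - (-((2 : ℝ) • c - x - (w + y))) := by abel
      rw [h3, this]; abel
  constructor
  · intro z hz hgz
    have := hgneg _ (hc z hz (by simpa [sub_sub] using hgz)).2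
    rw [h2c] at this
    convert this using 2
    abel
  · intro z hgz hz
    have := (hc (-(z - w - y)) (hsym _ hz) (by
      have := hgneg _ hgz
      convert this using 2; abel)).1
    rw [h2c] at this
    convert this using 1
    abel

lemma high_refl (v w : E) (h : ‖v‖ = ‖w‖) : ∃ g : E ≃ₗᵢ[ℝ] E, g v = w :=
  ⟨_, Submodule.reflection_sub h⟩

lemma high_uniq {R : ℝ} {u z : E} (hu : ‖u‖ = 1) (hz : ‖z‖ ≤ R)
    (h : inner ℝ u z = R) : z = R • u := by
  have h1 : ‖z - R • u‖ ^ 2 ≤ 0 := by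
    rw [norm_sub_sq_real, inner_smul_right, real_inner_comm, h, norm_smul, hu, mul_one,
      Real.norm_eq_abs, sq_abs]
    nlinarith [norm_nonneg z]
  have h2 : ‖z - R • u‖ = 0 := by nlinarith [norm_nonneg (z - R • u)]
  exact sub_eq_zero.1 (norm_eq_zero.1 h2)

lemma high_zero_int {K : Set E} {r : ℝ} (hr : 0 < r) (hball : closedBall 0 r ⊆ K) :
    (0 : E) ∈ interior K :=
  mem_interior.2 ⟨ball 0 r, ball_subset_closedBall.trans hball, isOpen_ball, mem_ball_self hr⟩

lemma high_inner {K : Set E} (hconv : Convex ℝ K) (hsym : ∀ z ∈ K, -z ∈ K) (H : HighH K)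
    {r R : ℝ} (hr : 0 < r) (hrR : r ≤ R) (hball : closedBall 0 r ⊆ K)
    (hR : ∀ z ∈ K, ‖z‖ ≤ R) {u0 u : E} (hu0 : ‖u0‖ = 1) (hu : ‖u‖ = 1)
    (hu0K : ∀ z ∈ K, inner ℝ u0 z ≤ r) (hp : R • u ∈ K) :
    closedBall ((R - r ^ 2 / (2 * R)) • u) (r ^ 2 / (2 * R)) ⊆ K := by
  have hRpos : 0 < R := hr.trans_le hrR
  have huu : inner ℝ u u = (1 : ℝ) := by rw [real_inner_self_eq_norm_sq, hu]; norm_num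
  obtain ⟨g, hg⟩ := high_refl u u0 (by rw [hu, hu0])
  have hle : ∀ z ∈ K, inner ℝ u z ≤ R := fun z hz => by
    have := real_inner_le_norm u z
    rw [hu, one_mul] at this
    exact this.trans (hR z hz)
  have key := high_key hconv (high_zero_int hr hball) hsym H g u (R • u) (r • u) ((R - r) • u) hp
    (by intro z hz; rw [inner_smul_right, huu, mul_one]; exact hle z hz)
    (by
      apply hball
      rw [mem_closedBall_zero_iff, g.norm_map, norm_smul, hu, mul_one, Real.norm_eq_abs,
        abs_of_pos hr])
    (by
      intro z hz
      rw [inner_smul_right, huu, mul_one, ← g.inner_map_map, hg]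
      exact hu0K _ hz)
    (Or.inl (by
      intro z hz h
      rw [inner_smul_right, huu, mul_one] at h
      exact high_uniq hu (hR z hz) h))
    (by
      have h0 : (R - r) • u = (1 - r / R) • (R • u) + (r / R) • (0 : E) := by
        rw [smul_smul, smul_zero, add_zero]; congr 1; field_simp
      rw [h0]
      exact hconv hp (hball (by simp [hr.le]))
        (by rw [sub_nonneg]; exact (div_le_one hRpos).2 hrR) (by positivity) (by ring))
    (by
      have : R • u - (R - r) • u - r • u = 0 := by module
      rw [this, map_zero]; exact high_zero_int hr hball)
  set η := r ^ 2 / (2 * R) with hη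
  have hη0 : 0 < η := by positivity
  have hηr : η * (2 * R) = r ^ 2 := by rw [hη]; field_simp
  have hηr' : η ≤ r := by nlinarith
  intro z' hz'
  rw [mem_closedBall, dist_eq_norm] at hz'
  set v := z' - (R - η) • u with hv
  have h1 := key.2 (z' - (R - r) • u) (by
      apply hball
      rw [mem_closedBall_zero_iff, g.norm_map]
      have e : z' - (R - r) • u = v + (r - η) • u := by rw [hv]; module
      rw [e]
      refine (norm_add_le _ _).trans ?_
      rw [norm_smul, hu, mul_one, Real.norm_eq_abs, abs_of_nonneg (by linarith)]
      linarith)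
    (by
      rw [← neg_neg (z' - (R - r) • u - (R - r) • u - r • u)]
      apply hsym
      have e : -(z' - (R - r) • u - (R - r) • u - r • u)
          = (1 - r / R) • (R • u) + (r / R) • ((R / r) • (η • u - v)) := by
        rw [smul_smul, smul_smul, hv]
        have a1 : (1 - r / R) * R = R - r := by field_simp
        have a2 : r / R * (R / r) = 1 := by field_simp
        rw [a1, a2]; module
      rw [e]
      refine hconv hp (hball ?_)
        (by rw [sub_nonneg]; exact (div_le_one hRpos).2 hrR) (by positivity) (by ring)
      rw [mem_closedBall_zero_iff, norm_smul, Real.norm_eq_abs, abs_of_pos (by positivity)]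
      have : ‖η • u - v‖ ≤ 2 * η := by
        refine (norm_sub_le _ _).trans ?_
        rw [norm_smul, hu, mul_one, Real.norm_eq_abs, abs_of_pos hη0]
        linarith
      calc R / r * ‖η • u - v‖ ≤ R / r * (2 * η) := by gcongr
        _ = r := by rw [hη]; field_simp)
  convert h1 using 1
  module

lemma high_local {K : Set E} (hconv : Convex ℝ K) (hsym : ∀ z ∈ K, -z ∈ K) (H : HighH K)
    {r R η : ℝ} (hr : 0 < r) (hrR : r ≤ R) (hball : closedBall 0 r ⊆ K)
    (hR : ∀ z ∈ K, ‖z‖ ≤ R) (hη : 0 < η) (hηR : η ≤ R) {p : E} (hp : p ∈ K)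
    (hin : closedBall ((1 - η / R) • p) η ⊆ K)
    (g : E ≃ₗᵢ[ℝ] E) {u x : E} (hu : ‖u‖ = 1) (hg : g (R • u) = p)
    (hx : x ∈ K) (hxtop : ∀ z ∈ K, inner ℝ u z ≤ inner ℝ u x) (z : E)
    (hz : dist z x < η * r / R ^ 2 * r / 2) : z ∈ K ↔ g (z - x + R • u) ∈ K := by
  have hRpos : 0 < R := hr.trans_le hrR
  have huu : inner ℝ u u = (1 : ℝ) := by rw [real_inner_self_eq_norm_sq, hu]; norm_num
  set l := η * r / R ^ 2 with hl
  have hl0 : 0 < l := by positivity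
  have hlR : l * R ^ 2 = η * r := by rw [hl]; field_simp
  have hl1 : l ≤ 1 := by
    rw [hl, div_le_one (by positivity)]; nlinarith
  have hlr : l * r ≤ η := by
    have c1 : l * R * r ≤ l * R * R := by gcongr
    have c2 : η * r ≤ η * R := by gcongr
    have c3 : (l * r) * R ≤ η * R := by nlinarith
    exact le_of_mul_le_mul_right c3 hRpos
  have hxr : r ≤ inner ℝ u x := by
    have := hxtop (r • u) (hball (by
      rw [mem_closedBall_zero_iff, norm_smul, hu, mul_one, Real.norm_eq_abs, abs_of_pos hr]))
    rwa [inner_smul_right, huu, mul_one] at this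
  have hnorm : ‖η • u - l • x‖ ≤ η - l * r / 2 := by
    apply le_of_sq_le_sq _ (by linarith [mul_pos hl0 hr]) 
    rw [norm_sub_sq_real, inner_smul_right, inner_smul_left, norm_smul, norm_smul, hu,
      Real.norm_eq_abs, Real.norm_eq_abs, abs_of_pos hη, abs_of_pos hl0]
    simp only [conj_trivial]
    have hxR := hR x hx
    have b1 : (l * ‖x‖) ^ 2 ≤ l * (η * r) := by
      rw [← hlR]
      have : ‖x‖ ^ 2 ≤ R ^ 2 := by gcongr
      nlinarith [mul_pos hl0 hl0]
    have b2 : l * (η * r) ≤ l * (η * inner ℝ u x) := by gcongr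
    nlinarith [mul_pos hl0 hr]
  have hF : ∀ v, ‖v - (l • x - R • u)‖ < l * r / 2 → g v ∈ K := by
    intro v hv
    rw [← neg_neg v, map_neg]
    apply hsym
    apply hin
    have e0 : (1 - η / R) • p = g ((R - η) • u) := by
      rw [← hg, ← map_smul, smul_smul]
      congr 2; field_simp
    rw [mem_closedBall, dist_eq_norm, e0, ← map_sub, g.norm_map]
    have e : -v - (R - η) • u = (η • u - l • x) - (v - (l • x - R • u)) := by module
    rw [e]
    refine (norm_sub_le _ _).trans ?_
    linarith
  have key := high_key hconv (high_zero_int hr hball) hsym H g u x (R • u) ((1 - l) • x) hx hxtop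
    (by rw [hg]; exact hp)
    (by
      intro z hz
      rw [inner_smul_right, huu, mul_one]
      have := real_inner_le_norm u z
      rw [hu, one_mul, ← g.norm_map z] at this
      exact this.trans (hR _ hz))
    (Or.inr (by
      intro z hz h
      rw [inner_smul_right, huu, mul_one] at h
      exact high_uniq hu (by rw [← g.norm_map]; exact hR _ hz) h))
    (by
      have := hconv hx (hball (by simp [hr.le] : (0 : E) ∈ closedBall 0 r))
        (sub_nonneg.2 hl1) hl0.le (by ring)
      simpa using this)
    (by
      have e : x - (1 - l) • x - R • u = l • x - R • u := by module
      rw [e, mem_interior]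
      refine ⟨ball _ (l * r / 2), ?_, isOpen_ball, mem_ball_self (by positivity)⟩
      intro k hk
      rw [← g.apply_symm_apply k] at hk ⊢
      rw [mem_ball, dist_eq_norm, ← map_sub, g.norm_map] at hk
      exact hF _ hk)
  rw [dist_eq_norm] at hz
  constructor
  · intro hzK
    refine key.1 z hzK (hF _ ?_)
    have e : z - (1 - l) • x - R • u - (l • x - R • u) = z - x := by module
    rw [e]; exact hz
  · intro hgz
    have := key.2 _ hgz (by
      rw [← neg_neg (z - x + R • u - (1 - l) • x - R • u)]
      apply hsym
      have e : -(z - x + R • u - (1 - l) • x - R • u) = (1 - l) • x + l • (l⁻¹ • (x - z)) := by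
        rw [smul_smul, mul_inv_cancel₀ hl0.ne']; module
      rw [e]
      refine hconv hx (hball ?_) (sub_nonneg.2 hl1) hl0.le (by ring)
      rw [mem_closedBall_zero_iff, norm_smul, Real.norm_eq_abs, abs_of_pos (by positivity),
        norm_sub_rev]
      calc l⁻¹ * ‖z - x‖ ≤ l⁻¹ * (l * r) := by gcongr; linarith [mul_pos hl0 hr]
        _ = r := by field_simp)
    convert this using 1
    module

lemma high_top_frontier {K : Set E} {u x : E} (hu : u ≠ 0) (hx : x ∈ K)
    (hxtop : ∀ z ∈ K, inner ℝ u z ≤ inner ℝ u x) : x ∈ frontier K := by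
  refine ⟨subset_closure hx, fun hi => ?_⟩
  obtain ⟨ε, hε, hb⟩ := Metric.isOpen_iff.1 isOpen_interior x hi
  have hun : 0 < ‖u‖ := norm_pos_iff.2 hu
  have h1 := hxtop (x + (ε / 2 / ‖u‖) • u) (interior_subset (hb (by
    rw [mem_ball, dist_eq_norm, add_sub_cancel_left, norm_smul, Real.norm_eq_abs,
      abs_of_pos (by positivity), div_mul_cancel₀ _ hun.ne']
    linarith)))
  rw [inner_add_right, inner_smul_right, real_inner_self_eq_norm_sq] at h1
  have : 0 < ε / 2 / ‖u‖ * ‖u‖ ^ 2 := by positivity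
  linarith

lemma high_support [CompleteSpace E] {K : Set E} (hconv : Convex ℝ K) (hint0 : (0 : E) ∈ interior K)
    {x : E} (hx : x ∉ interior K) :
    ∃ u : E, ‖u‖ = 1 ∧ ∀ z ∈ K, inner ℝ u z ≤ inner ℝ u x := by
  obtain ⟨f, hf⟩ := geometric_hahn_banach_open_point hconv.interior isOpen_interior hx
  set v := (InnerProductSpace.toDual ℝ E).symm f with hv
  have hfv : ∀ z, f z = inner ℝ v z := fun z => by
    rw [hv, InnerProductSpace.toDual_symm_apply]
  have hv0 : v ≠ 0 := by
    intro h0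
    have := hf 0 hint0
    rw [hfv, hfv, h0] at this
    simp at this
  have hle : ∀ z ∈ K, inner ℝ v z ≤ inner ℝ v x := by
    have hs : closure (interior K) ⊆ {z | inner ℝ v z ≤ inner ℝ v x} := by
      apply closure_minimal
      · intro z hz
        have := hf z hz
        rw [hfv, hfv] at this
        exact this.le
      · exact isClosed_le (by fun_prop) (by fun_prop)
    rw [hconv.closure_interior_eq_closure_of_nonempty_interior ⟨0, hint0⟩] at hs
    exact fun z hz => hs (subset_closure hz)
  refine ⟨‖v‖⁻¹ • v, ?_, ?_⟩
  · rw [norm_smul, norm_inv, norm_norm, inv_mul_cancel₀ (norm_ne_zero_iff.2 hv0)]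
  · intro z hz
    rw [real_inner_smul_left, real_inner_smul_left]
    exact mul_le_mul_of_nonneg_left (hle z hz) (by positivity)

lemma high_frontier_conn {K : Set E} (hrank : 1 < Module.rank ℝ E) (hconv : Convex ℝ K)
    (hK : IsCompact K) (hint0 : (0 : E) ∈ interior K) : IsPreconnected (frontier K) := by
  have hn : K ∈ nhds (0 : E) := mem_interior_iff_mem_nhds.1 hint0
  have hpos : ∀ z : E, z ≠ 0 → 0 < gauge K z := fun z hz =>
    (gauge_pos (absorbent_nhds_zero hn)
      ((NormedSpace.isVonNBounded_iff ℝ).2 hK.isBounded)).2 hz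
  have himg : frontier K = (fun z => (gauge K z)⁻¹ • z) '' ({0}ᶜ : Set E) := by
    ext z
    rw [← gauge_eq_one_iff_mem_frontier hconv hn]
    constructor
    · intro h
      refine ⟨z, ?_, by simp [h]⟩
      rintro rfl
      simp at h
    · rintro ⟨y, hy, rfl⟩
      have := hpos y hy
      simp only
      rw [gauge_smul_of_nonneg (by positivity), smul_eq_mul, inv_mul_cancel₀ this.ne']
  rw [himg]
  refine (isConnected_compl_singleton_of_one_lt_rank hrank 0).isPreconnected.image _ ?_
  have hc : Continuous (gauge K) := continuous_gauge hconv hn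
  exact (hc.continuousOn.inv₀ fun z hz => (hpos z hz).ne').smul continuousOn_id

lemma high_central [FiniteDimensional ℝ E] {K : Set E} (hrank : 1 < Module.rank ℝ E)
    (hK : IsCompact K) (hconv : Convex ℝ K) (hint : (interior K).Nonempty)
    (hsym : ∀ z ∈ K, -z ∈ K) (H : HighH K) : ∃ R : ℝ, 0 < R ∧ K = closedBall 0 R := by
  have : Nontrivial E := by
    rw [← rank_pos_iff_nontrivial (R := ℝ)]
    exact lt_trans zero_lt_one hrank
  have hint0 : (0 : E) ∈ interior K := by
    obtain ⟨a, ha⟩ := hint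
    have h1 : -a ∈ K := hsym _ (interior_subset ha)
    have := hconv.combo_interior_self_mem_interior ha h1 (by norm_num : (0 : ℝ) < 1 / 2)
      (by norm_num : (0 : ℝ) ≤ 1 / 2) (by norm_num)
    simpa using this
  have hne : (Kᶜ).Nonempty := by
    rw [Set.nonempty_compl]
    rintro rfl
    exact NormedSpace.unbounded_univ ℝ E hK.isBounded
  set r := infDist (0 : E) (Kᶜ) with hrdef
  obtain ⟨q, hq, hqr⟩ := (isClosed_closure (s := Kᶜ)).exists_infDist_eq_dist hne.closure (0 : E)
  rw [infDist_closure, ← hrdef, dist_zero_left] at hqr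
  rw [closure_compl] at hq
  have hr : 0 < r := by
    rw [hqr, norm_pos_iff]
    rintro rfl
    exact hq hint0
  have hball : closedBall 0 r ⊆ K := by
    rw [← closure_ball _ hr.ne']
    refine closure_minimal ?_ hK.isClosed
    intro z hz
    by_contra hzK
    have := infDist_le_dist_of_mem (x := (0 : E)) (s := Kᶜ) (y := z) hzK
    rw [dist_comm] at this
    exact absurd (mem_ball.1 hz) (not_lt.2 this)
  obtain ⟨u0, hu0, hu0q⟩ := high_support hconv hint0 hq
  have hu0K : ∀ z ∈ K, inner ℝ u0 z ≤ r := fun z hz => by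
    have := real_inner_le_norm u0 q
    rw [hu0, one_mul, ← hqr] at this
    exact (hu0q z hz).trans this
  obtain ⟨p, hp, hpmax⟩ := hK.exists_isMaxOn ⟨0, interior_subset hint0⟩
    (continuous_norm (E := E)).continuousOn
  set R := ‖p‖ with hRdef
  have hR : ∀ z ∈ K, ‖z‖ ≤ R := fun z hz => hpmax hz
  have hru0 : r • u0 ∈ K := hball (by
    rw [mem_closedBall_zero_iff, norm_smul, hu0, mul_one, Real.norm_eq_abs, abs_of_pos hr])
  have hrR : r ≤ R := by
    have := hR _ hru0
    rwa [norm_smul, hu0, mul_one, Real.norm_eq_abs, abs_of_pos hr] at this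
  have hRpos : 0 < R := hr.trans_le hrR
  set η := r ^ 2 / (2 * R) with hηdef
  have hη : 0 < η := by positivity
  have hηR : η ≤ R := by
    rw [hηdef, div_le_iff₀ (by positivity)]; nlinarith
  have hin : closedBall ((1 - η / R) • p) η ⊆ K := by
    have hpR : R • (R⁻¹ • p) = p := by rw [smul_smul, mul_inv_cancel₀ hRpos.ne', one_smul]
    have := high_inner hconv hsym H hr hrR hball hR hu0 (u := R⁻¹ • p)
      (by rw [norm_smul, norm_inv, Real.norm_eq_abs, abs_of_pos hRpos, ← hRdef,
            inv_mul_cancel₀ hRpos.ne'])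
      hu0K (by rw [hpR]; exact hp)
    rw [smul_smul] at this
    convert this using 3
    rw [hηdef]; field_simp
  have L := fun g u x => high_local hconv hsym H hr hrR hball hR hη hηR hp hin g (u := u) (x := x)
  set δ := η * r / R ^ 2 * r / 2 with hδdef
  have hδ : 0 < δ := by positivity
  have hRg : ∀ u : E, ‖u‖ = 1 → ‖R • u‖ = ‖p‖ := fun u hu => by
    rw [norm_smul, hu, mul_one, Real.norm_eq_abs, abs_of_pos hRpos]
  obtain ⟨g, hg⟩ := high_refl (R • u0) p (hRg u0 hu0)
  set b : E := -(r • u0) + R • u0 with hb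
  have huu : inner ℝ u0 u0 = (1 : ℝ) := by rw [real_inner_self_eq_norm_sq, hu0]; norm_num
  -- the comparison body is `{z | g (z + b) ∈ K}`
  have htop0 : ∀ z ∈ K, inner ℝ u0 z ≤ inner ℝ u0 (r • u0) := fun z hz => by
    rw [inner_smul_right, huu, mul_one]; exact hu0K z hz
  have hbase : ∀ z, dist z (r • u0) < δ → (z ∈ K ↔ g (z + b) ∈ K) := by
    intro z hz
    have := L g u0 (r • u0) hu0 hg hru0 htop0 z hz
    rw [this, hb]
    have e : z - r • u0 + R • u0 = z + (-(r • u0) + R • u0) := by abel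
    rw [e]
  have hstep : ∀ x, (∀ z, dist z x < δ → (z ∈ K ↔ g (z + b) ∈ K)) → ∀ y ∈ frontier K,
      dist y x < δ → ∀ z, dist z y < δ → (z ∈ K ↔ g (z + b) ∈ K) := by
    intro x hx y hy hyx z hz
    have hyK : y ∈ K := hK.isClosed.frontier_subset hy
    have hyK' := (hx y hyx).1 hyK
    obtain ⟨u, hu, hut⟩ := high_support hconv hint0 hy.2
    have hut' : ∀ v, g (v + b) ∈ K → inner ℝ u v ≤ inner ℝ u y := by
      intro v hv
      have hcont : Continuous fun s : ℝ => dist (y + s • (v - y)) x := by fun_prop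
      have hev : ∀ᶠ s : ℝ in nhds 0, dist (y + s • (v - y)) x < δ :=
        hcont.continuousAt.eventually_lt continuousAt_const (by simpa using hyx)
      obtain ⟨ε, hε, hεb⟩ := Metric.eventually_nhds_iff.1 hev
      set s := min (ε / 2) 1 with hs
      have hs0 : 0 < s := lt_min (by positivity) one_pos
      have hs1 : s ≤ 1 := min_le_right _ _
      have hsε : s < ε := lt_of_le_of_lt (min_le_left _ _) (by linarith)
      have h1 := hεb (y := s) (by rw [Real.dist_eq, sub_zero, abs_of_pos hs0]; exact hsε)
      have h2 : g (y + s • (v - y) + b) ∈ K := by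
        have e : y + s • (v - y) + b = (1 - s) • (y + b) + s • (v + b) := by module
        rw [e, map_add, map_smul, map_smul]
        exact hconv hyK' hv (by linarith) hs0.le (by ring)
      have h3 := hut _ ((hx _ h1).2 h2)
      rw [inner_add_right, inner_smul_right, inner_sub_right] at h3
      by_contra hcon
      push Not at hcon
      nlinarith
    obtain ⟨g1, hg1⟩ := high_refl (R • g u) p (hRg _ (by rw [g.norm_map, hu]))
    have l1 := L g1 (g u) (g (y + b)) (by rw [g.norm_map, hu]) hg1 hyK' (by
        intro v hv
        have := hut' (g.symm v - b) (by simpa using hv)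
        rw [← g.apply_symm_apply v, g.inner_map_map, g.inner_map_map]
        rw [inner_sub_right] at this
        rw [inner_add_right]
        linarith) (g (z + b)) (by
        rw [g.dist_map, dist_add_right]; exact hz)
    have l2 := L (g.trans g1) u y hu (by
        rw [LinearIsometryEquiv.trans_apply, map_smul]; exact hg1) hyK hut z hz
    rw [l1, l2, LinearIsometryEquiv.trans_apply, ← map_sub, ← map_smul, ← map_add]
    have e : z + b - (y + b) + R • u = z - y + R • u := by abel
    rw [e]
  have hu0ne : u0 ≠ 0 := by rintro rfl; simp at hu0
  have hall : frontier K ⊆ {x | g (x + b) ∈ K} := by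
    set A : Set E := {x | x ∈ frontier K ∧ ∀ z, dist z x < δ → (z ∈ K ↔ g (z + b) ∈ K)} with hA
    have hx0 : r • u0 ∈ A := ⟨high_top_frontier hu0ne hru0 htop0, hbase⟩
    have hsub : frontier K ⊆ ⋃ x ∈ A, ball x (δ / 2) := by
      apply (high_frontier_conn hrank hconv hK hint0).subset_of_closure_inter_subset
        (isOpen_biUnion fun _ _ => isOpen_ball)
      · exact ⟨r • u0, hx0.1, Set.mem_biUnion hx0 (mem_ball_self (by positivity))⟩
      · rintro y ⟨hyc, hyf⟩
        obtain ⟨w, hw, hyw⟩ := Metric.mem_closure_iff.1 hyc (δ / 2) (by positivity)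
        obtain ⟨x, hxA, hwx⟩ := Set.mem_iUnion₂.1 hw
        have hyx : dist y x < δ := by
          have := dist_triangle y w x
          have := mem_ball.1 hwx
          linarith
        exact Set.mem_biUnion (show y ∈ A from ⟨hyf, hstep x hxA.2 y hyf hyx⟩)
          (mem_ball_self (by positivity))
    intro y hy
    obtain ⟨x, hxA, hyx⟩ := Set.mem_iUnion₂.1 (hsub hy)
    exact (hxA.2 y (by have := mem_ball.1 hyx; linarith)).1 (hK.isClosed.frontier_subset hy)
  have hfr : ∀ v ∈ K, ‖v‖ = R → ‖v + b‖ ≤ R := by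
    intro v hv hvR
    have hvf : v ∈ frontier K := by
      refine high_top_frontier (u := v) (by rintro rfl; simp at hvR; linarith) hv ?_
      intro z hz
      refine (real_inner_le_norm v z).trans ?_
      rw [real_inner_self_eq_norm_sq, hvR]
      nlinarith [hR z hz]
    have := hR _ (hall hvf)
    rwa [g.norm_map] at this
  have f1 := hfr p hp rfl
  have f2 := hfr (-p) (hsym p hp) (by rw [norm_neg])
  have hpar := parallelogram_law_with_norm ℝ p b
  have e2 : ‖-p + b‖ = ‖p - b‖ := by rw [← norm_neg]; congr 1; abel
  rw [e2] at f2
  have hb0 : ‖b‖ = 0 := by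
    nlinarith [norm_nonneg b, norm_nonneg (p + b), norm_nonneg (p - b)]
  have hrReq : R = r := by
    have e : b = (R - r) • u0 := by rw [hb]; module
    rw [e, norm_smul, hu0, mul_one, Real.norm_eq_abs, abs_eq_zero] at hb0
    linarith
  refine ⟨R, hRpos, Set.Subset.antisymm ?_ ?_⟩
  · intro z hz
    rw [mem_closedBall_zero_iff]; exact hR z hz
  · rw [hrReq]; exact hball

end High

lemma CentrallySymmetric.exists_mem {S : Set (EuclideanSpace ℝ (Fin 2))}
    (h : CentrallySymmetric S) : ∃ c : EuclideanSpace ℝ (Fin 2), ∀ z ∈ S, (2 : ℝ) • c - z ∈ S := by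
  obtain ⟨c, hc⟩ := h
  refine ⟨c, fun z hz => ?_⟩
  rw [hc]
  exact ⟨z, hz, rfl⟩

/-- High's theorem: if all intersections of two congruent copies of a planar convex body
having interior points are centrally symmetric, then the body is a closed disk. -/
theorem stmt_0 (K : Set (EuclideanSpace ℝ (Fin 2)))
    (hKc : IsCompact K) (hKconv : Convex ℝ K) (hKint : (interior K).Nonempty)
    (h : ∀ φ ψ : EuclideanSpace ℝ (Fin 2) ≃ᵢ EuclideanSpace ℝ (Fin 2),
      (interior ((φ '' K) ∩ (ψ '' K))).Nonempty →
      CentrallySymmetric ((φ '' K) ∩ (ψ '' K))) :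
    ∃ (c : EuclideanSpace ℝ (Fin 2)) (r : ℝ), 0 < r ∧ K = closedBall c r := by
  have hid : (IsometryEquiv.refl (EuclideanSpace ℝ (Fin 2))) '' K = K := Set.image_id K
  obtain ⟨c, hc⟩ := (h (IsometryEquiv.refl _) (IsometryEquiv.refl _) (by
    rw [hid, Set.inter_self]; exact hKint)).exists_mem
  rw [hid, Set.inter_self] at hc
  set T := IsometryEquiv.addRight (-c) with hT
  set K0 := T '' K with hK0
  have hmem : ∀ z, z ∈ K0 ↔ z + c ∈ K := by
    intro z
    constructor
    · rintro ⟨y, hy, rfl⟩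
      simpa [hT] using hy
    · intro hz
      exact ⟨z + c, hz, by simp [hT]⟩
  have h0c : IsCompact K0 := hKc.image T.continuous
  have h0conv : Convex ℝ K0 := by
    intro x hx y hy a b ha hb hab
    rw [hmem] at *
    have := hKconv hx hy ha hb hab
    convert this using 1
    have : c = (a + b) • c := by rw [hab, one_smul]
    nth_rw 1 [this]
    module
  have h0int : (interior K0).Nonempty := by
    have := T.toHomeomorph.image_interior K
    have e : interior K0 = T '' interior K := this.symm
    rw [e]
    exact hKint.image _
  have h0sym : ∀ z ∈ K0, -z ∈ K0 := by
    intro z hz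
    rw [hmem] at *
    have := hc _ hz
    convert this using 1
    module
  have H : HighH K0 := by
    intro g a hne
    have e : K0 ∩ {z | g (z - a) ∈ K0} =
        (T '' K) ∩ ((T.trans (g.symm.toIsometryEquiv.trans (IsometryEquiv.addRight a))) '' K) := by
      congr 1
      ext z
      simp only [Set.mem_ofPred_eq, hK0, Set.mem_image]
      constructor
      · rintro ⟨y, hy, hyz⟩
        refine ⟨y, hy, ?_⟩
        simp [hyz]
      · rintro ⟨y, hy, rfl⟩
        refine ⟨y, hy, ?_⟩
        simp
    rw [e] at hne
    obtain ⟨d, hd⟩ := (h _ _ hne).exists_mem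
    rw [← e] at hd
    exact ⟨d, fun z hz hgz => hd z ⟨hz, hgz⟩⟩
  obtain ⟨R, hR, hKR⟩ := high_central (by
    rw [← Module.finrank_eq_rank, finrank_euclideanSpace_fin]; norm_num) h0c h0conv h0int h0sym H
  refine ⟨c, R, hR, ?_⟩
  ext z
  have := hmem (z - c)
  rw [sub_add_cancel] at this
  rw [← this, hKR, mem_closedBall_zero_iff, mem_closedBall, dist_eq_norm]
end

section
/- Let K, L be convex bodies in ℝ² such that for all rigid motions φ, ψ of ℝ², whenever (φ K) ∩ (ψ L) has nonempty interior, this intersection is centrally symmetric. Then K and L are closed disks of the same radius. -/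
open Metric

structure Ex (A : Set ℂ) : Prop where
  conv : Convex ℝ A
  cpt : IsCompact A
  ne : (interior A).Nonempty
  zero : (0:ℂ) ∈ A
  pos : ∀ a ∈ A, a ≠ 0 → 0 < a.re

def TT (A B : Set ℂ) : Prop := ∀ v : ℂ, (interior (A ∩ {x | v - x ∈ B})).Nonempty →
  ∃ c : ℂ, ∀ x, x ∈ A → v - x ∈ B → c - x ∈ A ∧ v - (c - x) ∈ B

def Smooth0 (B : Set ℂ) : Prop := ∀ d : ℂ, 0 < d.re → ∃ τ : ℝ, 0 < τ ∧ (τ:ℂ) * d ∈ B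

lemma Ex.re_nonneg {A : Set ℂ} (hA : Ex A) {a : ℂ} (ha : a ∈ A) : 0 ≤ a.re := by
  by_cases h : a = 0
  · simp [h]
  · exact (hA.pos a ha h).le

lemma Ex.smul {A : Set ℂ} (hA : Ex A) {a : ℂ} (ha : a ∈ A) {t : ℝ} (h0 : 0 ≤ t) (h1 : t ≤ 1) :
    (t:ℂ) * a ∈ A := by
  have := hA.conv.starConvex hA.zero
  have := this.smul_mem (x := a) ha h0 h1
  simpa using this

lemma Ex.comb_int {A : Set ℂ} (hA : Ex A) {a b : ℂ} (ha : a ∈ interior A) (hb : b ∈ A) {t : ℝ}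
    (h0 : 0 < t) (h1 : t ≤ 1) : b + (t:ℂ) * (a - b) ∈ interior A := by
  have := hA.conv.combo_interior_self_mem_interior ha hb h0 (sub_nonneg.2 h1) (by ring)
  convert this using 1
  simp
  ring

lemma Ex.smul_int {A : Set ℂ} (hA : Ex A) {a : ℂ} (ha : a ∈ interior A) {t : ℝ}
    (h0 : 0 < t) (h1 : t ≤ 1) : (t:ℂ) * a ∈ interior A := by
  have := hA.comb_int ha hA.zero h0 h1
  simpa using this

lemma Ex.int_pos {A : Set ℂ} (hA : Ex A) {a : ℂ} (ha : a ∈ interior A) : 0 < a.re := by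
  apply hA.pos a (interior_subset ha)
  rintro rfl
  have h1 : ∀ᶠ t : ℝ in nhdsWithin 0 (Set.Ioi 0), (-(t:ℂ)) ∈ A := by
    have : Filter.Tendsto (fun t : ℝ => -(t:ℂ)) (nhds 0) (nhds 0) := by
      have : Continuous (fun t : ℝ => -(t:ℂ)) := by fun_prop
      simpa using this.tendsto 0
    exact (this.eventually (mem_interior_iff_mem_nhds.1 ha)).filter_mono nhdsWithin_le_nhds
  obtain ⟨t, h, ht⟩ := (h1.and self_mem_nhdsWithin).exists
  have := hA.re_nonneg h
  simp at this ht
  linarith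

/-- Interior perturbation. -/
lemma int_pert {A : Set ℂ} {a : ℂ} (ha : a ∈ interior A) (d : ℂ) :
    ∃ t : ℝ, 0 < t ∧ t ≤ 1 ∧ ∀ s : ℝ, 0 ≤ s → s ≤ t → a + (s:ℂ) * d ∈ interior A := by
  have hc : Continuous (fun s : ℝ => a + (s:ℂ) * d) := by fun_prop
  have : (fun s : ℝ => a + (s:ℂ) * d) ⁻¹' interior A ∈ nhds (0:ℝ) :=
    hc.continuousAt.preimage_mem_nhds (by simpa using isOpen_interior.mem_nhds ha)
  obtain ⟨ε, he, h⟩ := Metric.mem_nhds_iff.1 this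
  refine ⟨min 1 (ε/2), by positivity, min_le_left _ _, fun s h0 h1 => ?_⟩
  apply h
  have := h1.trans (min_le_right _ _)
  simp [abs_of_nonneg h0]
  linarith

lemma lem1 {A B : Set ℂ} (hA : Ex A) (hB : Ex B) (hT : TT A B) {v : ℂ} (hvA : v ∈ A) (hvB : v ∈ B)
    (hi : (interior (A ∩ {x | v - x ∈ B})).Nonempty) {w : ℂ} (hw : w ∈ A) (hw' : v - w ∈ B) :
    w ∈ B := by
  obtain ⟨c, hc⟩ := hT v hi
  have h0 := hc 0 hA.zero (by simpa using hvB)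
  have h1 := hc v hvA (by simpa using hB.zero)
  have e : v - c = 0 := by
    by_contra hne
    have a1 := hB.pos (v - c) (by simpa using h0.2) hne
    have a2 := hA.re_nonneg h1.1
    simp at a1 a2
    linarith
  have : c = v := (sub_eq_zero.1 e).symm
  subst this
  simpa using (hc w hw hw').2

lemma lem2 {A B : Set ℂ} (hA : Ex A) (hB : Ex B) (hT : TT A B) {v w : ℂ} (hvA : v ∈ A) (hvB : v ∈ B)
    (hi : v + w ∈ interior (A ∩ B)) (hw : w ∈ A) : w ∈ B := by
  have hm := interior_subset hi
  refine lem1 hA hB hT hm.1 hm.2 ?_ hw (by simpa using hvB)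
  have hvi : v + w ∈ interior B := interior_mono Set.inter_subset_right hi
  obtain ⟨a, ha⟩ := hA.ne
  obtain ⟨t, ht, ht1, h⟩ := int_pert hvi (-a)
  refine ⟨t * a, ?_⟩
  rw [interior_inter]
  refine ⟨hA.smul_int ha ht ht1, ?_⟩
  have hsub : (fun x => v + w - x) ⁻¹' (interior B) ⊆ interior {x | v + w - x ∈ B} := by
    apply interior_maximal
    · intro x hx
      exact interior_subset (s := B) hx
    · exact isOpen_interior.preimage (by fun_prop)
  apply hsub
  have := h t ht.le le_rfl
  simpa [sub_eq_add_neg] using this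

lemma lem3 {A B : Set ℂ} (hA : Ex A) (hB : Ex B) (hT : TT A B) (hT' : TT B A)
    (hi : (interior (A ∩ B)).Nonempty) :
    ∃ ρ > 0, ∀ w : ℂ, ‖w‖ < ρ → (w ∈ A ↔ w ∈ B) := by
  obtain ⟨v, hv⟩ := hi
  obtain ⟨ρ, hρ, h⟩ := Metric.isOpen_iff.1 isOpen_interior v hv
  refine ⟨ρ, hρ, fun w hw => ?_⟩
  have h1 : v + w ∈ interior (A ∩ B) := h (by simpa using hw)
  have h2 := interior_subset hv
  exact ⟨lem2 hA hB hT h2.1 h2.2 h1, lem2 hB hA hT' h2.2 h2.1 (by rwa [Set.inter_comm])⟩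

lemma lem4 {A B : Set ℂ} (hA : Ex A) (hB : Ex B) (hs : Smooth0 B) :
    (interior (A ∩ B)).Nonempty := by
  obtain ⟨a, ha⟩ := hA.ne
  obtain ⟨b, hb⟩ := hB.ne
  obtain ⟨ε, he, he1, h⟩ := int_pert ha (-b)
  have h1 := h ε he.le le_rfl
  have h2 := hA.int_pos h1
  obtain ⟨τ, hτ, h3⟩ := hs _ h2
  have hp : 0 < 1 + ε * τ := by positivity
  have h4 := hB.comb_int hb h3 (t := ε * τ / (1 + ε * τ)) (by positivity)
    (by rw [div_le_one hp]; linarith)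
  have hpc : (1 + (ε:ℂ) * τ) ≠ 0 := by exact_mod_cast hp.ne'
  have h6 : (τ/(1+ε*τ) : ℝ) * a ∈ interior B := by
    convert h4 using 1
    push_cast
    have hq := mul_inv_cancel₀ hpc
    simp only [div_eq_mul_inv]
    linear_combination ((τ:ℂ) * a - τ * ε * b) * hq
  -- scale down further
  have h7 := hB.smul_int h6 (t := (1/(1+τ))) (by positivity) (by rw [div_le_one (by positivity)]; linarith)
  refine ⟨((1/(1+τ) : ℝ):ℂ) * (((τ/(1+ε*τ) : ℝ):ℂ) * a), ?_⟩
  rw [interior_inter]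
  refine ⟨?_, h7⟩
  rw [← mul_assoc, ← Complex.ofReal_mul]
  refine hA.smul_int ha (by positivity) ?_
  rw [div_mul_div_comm, div_le_one (by positivity)]
  nlinarith [mul_pos he hτ, mul_pos hp hτ]

lemma lem4' {A B : Set ℂ} (hA : Ex A) (hB : Ex B) (hT : TT A B) (hT' : TT B A) (hs : Smooth0 B) :
    Smooth0 (A ∩ B) := by
  obtain ⟨ρ, hρ, h⟩ := lem3 hA hB hT hT' (lem4 hA hB hs)
  intro d hd
  obtain ⟨τ, hτ, hm⟩ := hs d hd
  set m := (τ:ℂ) * d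
  set k : ℝ := ρ / (ρ + ‖m‖ + 1)
  have hD : 0 < ρ + ‖m‖ + 1 := by positivity
  have hk : 0 < k := by positivity
  have hk1 : k ≤ 1 := by
    rw [div_le_one hD]; linarith [norm_nonneg m]
  have h1 := hB.smul hm hk.le hk1
  refine ⟨k * τ, by positivity, ?_⟩
  have e : ((k * τ : ℝ) : ℂ) * d = k * m := by simp [m, mul_assoc]
  rw [e]
  refine ⟨(h _ ?_).2 h1, h1⟩
  rw [norm_mul, Complex.norm_real, Real.norm_of_nonneg hk.le]
  simp only [k]
  rw [div_mul_eq_mul_div, div_lt_iff₀ hD]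
  have := norm_nonneg m
  nlinarith

lemma lem5 {A B : Set ℂ} (hA : Ex A) (hB : Ex B) (hT : TT A B)
    (hi : (interior (A ∩ B)).Nonempty) (hs : Smooth0 (A ∩ B)) {w : ℂ} (hw : w ∈ A) (hwB : w ∉ B) :
    ∃ s : ℝ, 0 ≤ s ∧ s < 1 ∧ ∀ c ∈ A ∩ B, c.re ≤ s * w.re := by
  have hcl : IsCompact (Set.Icc (0:ℝ) 1 ∩ (fun s : ℝ => (s:ℂ) * w) ⁻¹' B) :=
    isCompact_Icc.inter_right (hB.cpt.isClosed.preimage (by fun_prop))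
  obtain ⟨s, ⟨⟨hs0, hs1⟩, hsB⟩, hmax⟩ := hcl.exists_isMaxOn ⟨0, by simp [hB.zero]⟩ continuousOn_id
  have hlt : s < 1 := by
    rcases hs1.lt_or_eq with h | h
    · exact h
    · subst h; simp at hsB; exact absurd hsB hwB
  refine ⟨s, hs0, hlt, fun c hc => ?_⟩
  by_contra! hlt2
  simp only [Set.mem_preimage] at hsB
  have hsC : (s:ℂ) * w ∈ A ∩ B := ⟨hA.smul hw hs0 hs1, hsB⟩
  have hEC : Ex (A ∩ B) := ⟨hA.conv.inter hB.conv, hA.cpt.inter_right hB.cpt.isClosed, hi,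
    ⟨hA.zero, hB.zero⟩, fun a ha => hA.pos a ha.1⟩
  obtain ⟨c', hc', hlt3⟩ : ∃ c' ∈ interior (A ∩ B), s * w.re < c'.re := by
    have hcc : c ∈ closure (interior (A ∩ B)) := by
      rw [hEC.conv.closure_interior_eq_closure_of_nonempty_interior hi]
      exact subset_closure hc
    obtain ⟨x, hx, hx2⟩ := mem_closure_iff.1 hcc {z | s * w.re < z.re}
      (isOpen_lt continuous_const Complex.continuous_re) hlt2
    exact ⟨x, hx2, hx⟩
  obtain ⟨τ, hτ, hm⟩ := hs (c' - s * w) (by simp; linarith)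
  set k : ℝ := 1 / (1 + τ)
  have hk : 0 < k := by positivity
  have hk1 : k ≤ 1 := by rw [div_le_one (by positivity)]; linarith
  have hkt : k * τ ≤ 1 := by
    simp only [k]; rw [div_mul_eq_mul_div, div_le_one (by positivity)]; linarith
  have hv := hEC.smul hm hk.le hk1
  have hvi := hEC.comb_int hc' hsC (t := k * τ) (by positivity) hkt
  obtain ⟨t, ht, ht1, h⟩ := int_pert hvi w
  set t' := min t (1 - s)
  have ht' : 0 < t' := lt_min ht (by linarith)
  have h1 := h t' ht'.le (min_le_left _ _)
  have hle : s + t' ≤ 1 := by have := min_le_right t (1-s); simp only [t']; linarith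
  have hsw : ((s + t' : ℝ):ℂ) * w ∈ A := hA.smul hw (by positivity) hle
  have := lem2 hA hB hT hv.1 hv.2 (w := ((s + t' : ℝ):ℂ) * w) (by
    convert h1 using 1
    push_cast; ring) hsw
  have := hmax (a := s + t') ⟨⟨by positivity, hle⟩, this⟩
  simp at this
  linarith

lemma level {A : Set ℂ} (hA : Ex A) {w : ℂ} (hw : w ∈ A) {H : ℝ} (hH : 0 < H) (h : H < w.re) :
    ∃ z ∈ interior A, z.re = H := by
  obtain ⟨a, ha⟩ := hA.ne
  have hap := hA.int_pos ha
  set k : ℝ := H / (H + a.re)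
  have hk : 0 < k := by positivity
  have hk1 : k ≤ 1 := by rw [div_le_one (by positivity)]; linarith
  have h1 := hA.smul_int ha hk hk1
  have h2 : k * a.re < H := by
    simp only [k]; rw [div_mul_eq_mul_div, div_lt_iff₀ (by positivity)]; nlinarith
  have hd : 0 < w.re - k * a.re := by linarith
  have h3 := hA.comb_int h1 hw (t := (w.re - H) / (w.re - k * a.re))
    (div_pos (by linarith) hd) (by rw [div_le_one hd]; linarith)
  refine ⟨_, h3, ?_⟩
  rw [Complex.add_re, Complex.re_ofReal_mul, Complex.sub_re, Complex.re_ofReal_mul]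
  field_simp
  ring

/-- if `B ⊆ A` strictly -/
lemma lem6a {A B : Set ℂ} (hA : Ex A) (hB : Ex B) (hT : TT A B)
    (hi : (interior (A ∩ B)).Nonempty) (hs : Smooth0 (A ∩ B)) {w : ℂ} (hw : w ∈ A) (hwB : w ∉ B) :
    ∃ H : ℝ, 0 < H ∧ H < w.re ∧ (∀ c ∈ A ∩ B, c.re ≤ H) ∧ (∀ z ∈ A, z.re ≤ H → z ∈ B) ∧
      ∃ z ∈ interior A, z.re = H := by
  obtain ⟨s, hs0, hs1, h⟩ := lem5 hA hB hT hi hs hw hwB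
  obtain ⟨c, hc⟩ := hi
  have hcp := hA.int_pos (interior_mono Set.inter_subset_left hc)
  have hcle := h c (interior_subset hc)
  have hwp : 0 < w.re := by
    have := hA.re_nonneg hw
    rcases this.lt_or_eq with h | h
    · exact h
    · rw [← h] at hcle; simp at hcle; linarith
  have hlt : s * w.re < w.re := by nlinarith
  have hex := level hA hw (H := s * w.re) (by linarith) hlt
  -- sup of C
  have hcpt : IsCompact (A ∩ B) := hA.cpt.inter_right hB.cpt.isClosed
  obtain ⟨m, hm, hmax⟩ := hcpt.exists_isMaxOn ⟨c, interior_subset hc⟩ Complex.continuous_re.continuousOn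
  have hmc : c.re ≤ m.re := hmax (interior_subset hc)
  have hmw : m.re ≤ s * w.re := h m hm
  refine ⟨m.re, by linarith, by linarith, fun x hx => hmax hx, ?_, level hA hw (by linarith) (by linarith)⟩
  intro z hz hzle
  by_contra hzB
  obtain ⟨s', hs0', hs1', h'⟩ := lem5 hA hB hT ⟨c, hc⟩ hs hz hzB
  have := h' m hm
  nlinarith

def TwoMax (A : Set ℂ) : Prop := ∃ z₁ ∈ A, ∃ z₂ ∈ A, z₁ ≠ z₂ ∧ (∀ a ∈ A, a.re ≤ z₁.re) ∧ (∀ a ∈ A, a.re ≤ z₂.re)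

lemma lem6b {A B : Set ℂ} (hA : Ex A) (hB : Ex B) (hT : TT A B)
    (hi : (interior (A ∩ B)).Nonempty) (hs : Smooth0 (A ∩ B)) (hBA : B ⊆ A) (hne : ¬ A ⊆ B) :
    TwoMax B := by
  obtain ⟨w, hw, hwB⟩ := Set.not_subset.1 hne
  obtain ⟨H, hH, hHw, hle, hin, z, hz, hzH⟩ := lem6a hA hB hT hi hs hw hwB
  obtain ⟨t, ht, -, h⟩ := int_pert hz Complex.I
  have h1 := interior_subset (h t ht.le le_rfl)
  have hre : (z + t * Complex.I).re = H := by simp [hzH]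
  refine ⟨z, hin z (interior_subset hz) hzH.le, z + t * Complex.I, hin _ h1 hre.le, ?_, ?_, ?_⟩
  · simp [ht.ne']
  · intro a ha; rw [hzH]; exact hle a ⟨hBA ha, ha⟩
  · intro a ha; rw [hre]; exact hle a ⟨hBA ha, ha⟩

lemma key {A B : Set ℂ} (hA : Ex A) (hB : Ex B) (hT : TT A B) (hT' : TT B A) (hsB : Smooth0 B) :
    A = B ∨ TwoMax A ∨ TwoMax B := by
  have hi := lem4 hA hB hsB
  have hs := lem4' hA hB hT hT' hsB
  have hi' : (interior (B ∩ A)).Nonempty := by rwa [Set.inter_comm]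
  have hs' : Smooth0 (B ∩ A) := by rwa [Set.inter_comm]
  by_cases h1 : A ⊆ B
  · by_cases h2 : B ⊆ A
    · exact Or.inl (h1.antisymm h2)
    · exact Or.inr (Or.inl (lem6b hB hA hT' hi' hs' h1 h2))
  · by_cases h2 : B ⊆ A
    · exact Or.inr (Or.inr (lem6b hA hB hT hi hs h2 h1))
    · exfalso
      obtain ⟨w, hw, hwB⟩ := Set.not_subset.1 h1
      obtain ⟨w', hw', hwA'⟩ := Set.not_subset.1 h2
      obtain ⟨H, hH, hHw, hle, hin, z, hz, hzH⟩ := lem6a hA hB hT hi hs hw hwB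
      obtain ⟨H', hH', hHw', hle', hin', z', hz', hzH'⟩ := lem6a hB hA hT' hi' hs' hw' hwA'
      have hzB := hin z (interior_subset hz) hzH.le
      have hw'H : H < w'.re := by
        by_contra! hcon
        have := hle' z ⟨hzB, interior_subset hz⟩
        linarith
      obtain ⟨t, ht, ht1, h⟩ := int_pert hz (w' - z)
      have hxA := interior_subset (h t ht.le le_rfl)
      have hxB : z + t * (w' - z) ∈ B := by
        have := hB.conv.add_smul_sub_mem hzB hw' ⟨ht.le, ht1⟩
        simpa using this
      have := hle _ ⟨hxA, hxB⟩
      simp [hzH] at this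
      nlinarith

lemma iso_coe_trans {X Y Z : Type*} [PseudoEMetricSpace X] [PseudoEMetricSpace Y]
    [PseudoEMetricSpace Z] (f : X ≃ᵢ Y) (g : Y ≃ᵢ Z) : ⇑(f.trans g) = g ∘ f := rfl

lemma iso_image_refl (A : Set ℂ) : (IsometryEquiv.refl ℂ) '' A = A := Set.image_id A

def Good (A B : Set ℂ) : Prop := ∀ φ ψ : ℂ ≃ᵢ ℂ, (interior ((φ '' A) ∩ (ψ '' B))).Nonempty →
  ∃ c : ℂ, ∀ x ∈ (φ '' A) ∩ (ψ '' B), c - x ∈ (φ '' A) ∩ (ψ '' B)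

lemma Good.symm {A B : Set ℂ} (h : Good A B) : Good B A := by
  intro φ ψ hi
  rw [Set.inter_comm] at hi ⊢
  exact h ψ φ hi

lemma Good.image {A B : Set ℂ} (h : Good A B) (f g : ℂ ≃ᵢ ℂ) : Good (f '' A) (g '' B) := by
  intro φ ψ hi
  have := h (f.trans φ) (g.trans ψ)
  simp only [iso_coe_trans, Set.image_comp] at this
  exact this hi

lemma Good.tt {A B : Set ℂ} (h : Good A B) : TT A B := by
  intro v hi
  have e : (IsometryEquiv.subLeft v : ℂ ≃ᵢ ℂ) '' B = {x | v - x ∈ B} := by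
    ext x
    simp only [Set.mem_image, Set.mem_ofPred_eq]
    constructor
    · rintro ⟨b, hb, rfl⟩; simpa using hb
    · intro hx; exact ⟨v - x, hx, by simp⟩
  have := h (IsometryEquiv.refl ℂ) (IsometryEquiv.subLeft v)
  rw [e] at this
  rw [iso_image_refl] at this
  obtain ⟨c, hc⟩ := this hi
  exact ⟨c, fun x hx hx' => hc x ⟨hx, hx'⟩⟩

lemma iso_conv {A : Set ℂ} (h : Convex ℝ A) (f : ℂ ≃ᵢ ℂ) : Convex ℝ (f '' A) := by
  have := h.affine_image (f.toRealAffineIsometryEquiv.toAffineEquiv : ℂ →ᵃ[ℝ] ℂ)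
  simpa using this

lemma iso_int {A : Set ℂ} (h : (interior A).Nonempty) (f : ℂ ≃ᵢ ℂ) : (interior (f '' A)).Nonempty := by
  have := f.toHomeomorph.image_interior A
  simp only [IsometryEquiv.coe_toHomeomorph] at this
  rw [← this]
  exact h.image _

lemma sep {A B : Set ℂ} (hA : Convex ℝ A) (hB : Convex ℝ B) (hAi : (interior A).Nonempty)
    (h0 : (0:ℂ) ∈ A) (hB0 : (0:ℂ) ∈ closure B) (hd : Disjoint (interior A) B) :
    ∃ f : ℂ →L[ℝ] ℝ, (∀ a ∈ interior A, f a < 0) ∧ (∀ a ∈ A, f a ≤ 0) ∧ (∀ b ∈ B, 0 ≤ f b) := by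
  obtain ⟨f, s, h1, h2⟩ := geometric_hahn_banach_open hA.interior isOpen_interior hB hd
  have hs : s ≤ 0 := by
    have : closure B ⊆ {x | s ≤ f x} :=
      closure_minimal h2 (isClosed_le continuous_const f.continuous)
    simpa using this hB0
  have hs2 : ∀ a ∈ A, f a ≤ s := by
    have : closure (interior A) ⊆ {x | f x ≤ s} :=
      closure_minimal (fun x hx => (h1 x hx).le) (isClosed_le f.continuous continuous_const)
    rw [hA.closure_interior_eq_closure_of_nonempty_interior hAi] at this
    exact fun a ha => this (subset_closure ha)
  have : s = 0 := le_antisymm hs (by simpa using hs2 0 h0)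
  subst this
  exact ⟨f, h1, hs2, h2⟩

lemma clm_eq (f : ℂ →L[ℝ] ℝ) (z : ℂ) : f z = z.re * f 1 + z.im * f Complex.I := by
  conv_lhs => rw [show z = z.re • (1:ℂ) + z.im • Complex.I by simp]
  rw [map_add, map_smul, map_smul]; simp

lemma stepA {A B : Set ℂ} (hA : Ex A) (hB : Ex B) {D D' : ℝ} (hD : 0 < D) (hD' : 0 < D')
    (h : (D:ℂ) ∈ A) (h' : (D':ℂ) ∈ B) (hB' : Ex (Complex.conjLIE.toIsometryEquiv '' B)) :
    (interior (A ∩ B)).Nonempty ∨ (interior (A ∩ Complex.conjLIE.toIsometryEquiv '' B)).Nonempty := by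
  have main : ∀ B' : Set ℂ, Ex B' → (D':ℂ) ∈ B' → ¬ (interior (A ∩ B')).Nonempty →
      ∀ a ∈ interior A, ∀ b ∈ interior B', a.im * b.im < 0 := by
    intro B' hB' h' hne a ha b hb
    rw [interior_inter, Set.not_nonempty_iff_eq_empty, ← Set.disjoint_iff_inter_eq_empty] at hne
    have hcl : (0:ℂ) ∈ closure (interior A) := by
      rw [hA.conv.closure_interior_eq_closure_of_nonempty_interior hA.ne]
      exact subset_closure hA.zero
    obtain ⟨f, h1, h2, h3⟩ := sep hB'.conv hA.conv.interior hB'.ne hB'.zero hcl hne.symm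
    have h3' : ∀ a ∈ A, 0 ≤ f a := by
      have : closure (interior A) ⊆ {x | 0 ≤ f x} :=
        closure_minimal h3 (isClosed_le continuous_const f.continuous)
      rw [hA.conv.closure_interior_eq_closure_of_nonempty_interior hA.ne] at this
      exact fun a ha => this (subset_closure ha)
    have e1 := h3' _ h
    have e2 := h2 _ h'
    rw [clm_eq] at e1 e2
    simp at e1 e2
    have e3 : f 1 = 0 := by
      apply le_antisymm
      · by_contra! hc
        nlinarith
      · by_contra! hc
        nlinarith
    have k1 := h1 b hb
    -- strict on interior A
    obtain ⟨t, ht, -, hp⟩ := int_pert ha (b - a)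
    have k2 : 0 < f a := by
      obtain ⟨t, ht, -, hp⟩ := int_pert ha b
      have := h3 _ (hp t ht.le le_rfl)
      rw [map_add, show (t:ℂ) * b = t • b by simp, map_smul, smul_eq_mul] at this
      nlinarith
    rw [clm_eq, e3] at k1 k2
    simp at k1 k2
    by_contra! hcon
    have : (a.im * f Complex.I) * (b.im * f Complex.I) < 0 := mul_neg_of_pos_of_neg k2 k1
    nlinarith [mul_nonneg hcon (sq_nonneg (f Complex.I))]
  by_contra! hcon
  obtain ⟨a, ha⟩ := hA.ne
  obtain ⟨b, hb⟩ := hB.ne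
  have m1 := main B hB h' (Set.not_nonempty_iff_eq_empty.2 hcon.1) a ha b hb
  have m2 := main _ hB' ⟨D', h', by simp⟩ (Set.not_nonempty_iff_eq_empty.2 hcon.2) a ha (star b) (by
    have := Complex.conjLIE.toIsometryEquiv.toHomeomorph.image_interior B
    simp only [IsometryEquiv.coe_toHomeomorph] at this
    rw [← this]
    exact ⟨b, hb, by simp⟩)
  simp at m2
  linarith

lemma stepB {A B : Set ℂ} (hG : Good A B) (hA : Ex A) (hB : Ex B)
    (hi : (interior (A ∩ B)).Nonempty) : Smooth0 B := by
  by_contra hns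
  unfold Smooth0 at hns
  push Not at hns
  obtain ⟨d, hd, hno⟩ := hns
  set R : Set ℂ := (fun τ : ℝ => (τ:ℂ) * d) '' Set.Ioi 0
  have hRc : Convex ℝ R := by
    have : R = (LinearMap.toSpanSingleton ℝ ℂ d) '' Set.Ioi 0 := by
      ext; simp [R]
    rw [this]
    exact (convex_Ioi 0).linear_image _
  have hR0 : (0:ℂ) ∈ closure R := by
    have hc : Continuous (fun τ : ℝ => (τ:ℂ) * d) := by fun_prop
    have := image_closure_subset_closure_image hc (s := Set.Ioi (0:ℝ))
    apply this
    exact ⟨0, by simp, by simp⟩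
  obtain ⟨f, h1, h2, h3⟩ := sep hB.conv hRc hB.ne hB.zero hR0 (by
    rw [Set.disjoint_left]
    rintro x hx ⟨τ, hτ, rfl⟩
    exact hno τ hτ (interior_subset hx))
  have hfd : 0 ≤ f d := h3 d ⟨1, by simp, by simp⟩
  obtain ⟨a, ha⟩ := hi
  have haA : a ∈ interior A := interior_mono Set.inter_subset_left ha
  have haB : a ∈ interior B := interior_mono Set.inter_subset_right ha
  have haf := h1 a haB
  have hap := hA.int_pos haA
  obtain ⟨p, hp⟩ : ∃ p, p = f 1 := ⟨_, rfl⟩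
  obtain ⟨q, hqq⟩ : ∃ q, q = f Complex.I := ⟨_, rfl⟩
  have hq : q ≠ 0 := by
    intro hq
    rw [clm_eq] at haf hfd
    rw [← hp, ← hqq, hq] at hfd haf
    simp at hfd haf
    nlinarith [nonneg_of_mul_nonneg_right hfd hd]
  -- U t : conj of the new normal
  let U : ℝ → ℂ := fun t => 1 - t * (p - q * Complex.I)
  have hU : ∀ t z, (U t * z).re = z.re - t * f z := by
    intro t z
    rw [clm_eq f z]
    simp [U, ← hp, ← hqq]
    ring
  have hUc : Continuous U := by fun_prop
  have hrc : ContinuousAt (fun t => U t / ‖U t‖ * a) 0 := by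
    apply ContinuousAt.mul _ continuousAt_const
    apply ContinuousAt.div hUc.continuousAt
    · exact (Complex.continuous_ofReal.comp (hUc.norm)).continuousAt
    · simp [U]
  have hev : ∀ᶠ t in nhdsWithin (0:ℝ) (Set.Ioi 0), U t / ‖U t‖ * a ∈ interior A := by
    apply Filter.Eventually.filter_mono nhdsWithin_le_nhds
    apply hrc.eventually
    apply isOpen_interior.mem_nhds
    simpa [U] using haA
  obtain ⟨t, hta, ht⟩ := (hev.and self_mem_nhdsWithin).exists
  replace ht : 0 < t := ht
  have hUim : (U t).im = t * q := by simp [U]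
  have hUne : U t ≠ 0 := by
    intro h0
    rw [h0] at hUim
    simp at hUim
    rcases hUim with h | h
    · linarith
    · exact hq h
  have hN : 0 < ‖U t‖ := norm_pos_iff.2 hUne
  set r : ℂ := U t / ‖U t‖
  have hr1 : ‖r‖ = 1 := by simp [r, hN.ne']
  have hrre : ∀ z, (r * z).re = (z.re - t * f z) / ‖U t‖ := by
    intro z
    rw [← hU, show r * z = (U t * z) / (‖U t‖ : ℝ) by simp only [r]; ring, Complex.div_ofReal_re]
  have hrim : r.im ≠ 0 := by
    simp only [r]
    rw [Complex.div_ofReal_im, hUim]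
    have := ht.ne'
    positivity
  have hrlt : r.re < 1 := by
    have := Complex.sq_norm r
    rw [hr1, Complex.normSq_apply] at this
    have h4 : 0 < r.im * r.im := mul_self_pos.2 hrim
    nlinarith
  let rc : Circle := ⟨r, by simp [Submonoid.unitSphere, hr1]⟩
  let g : ℂ ≃ᵢ ℂ := (rotation rc).toIsometryEquiv
  have hg : ∀ z, g z = r * z := fun z => rfl
  have hrr : r * star r = 1 := by
    have := Complex.mul_conj r
    rw [Complex.normSq_eq_norm_sq, hr1] at this
    simpa using this
  have hgE : Ex (g '' B) := by
    refine ⟨iso_conv hB.conv g, hB.cpt.image g.continuous, iso_int hB.ne g, ⟨0, hB.zero, by simp [hg]⟩, ?_⟩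
    rintro _ ⟨b, hb, rfl⟩ hne
    have hb0 : b ≠ 0 := by rintro rfl; simp [hg] at hne
    rw [hg, hrre]
    have := hB.pos b hb hb0
    have := h2 b hb
    apply div_pos _ hN
    nlinarith
  have hG2 : Good A (g '' B) := by
    have := hG.image (IsometryEquiv.refl ℂ) g
    rwa [iso_image_refl] at this
  obtain ⟨ρ₁, hρ₁, e1⟩ := lem3 hA hB hG.tt hG.symm.tt ⟨a, ha⟩
  obtain ⟨ρ₂, hρ₂, e2⟩ := lem3 hA hgE hG2.tt hG2.symm.tt ⟨r * a, by
    rw [interior_inter]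
    refine ⟨hta, ?_⟩
    have := g.toHomeomorph.image_interior B
    simp only [IsometryEquiv.coe_toHomeomorph] at this
    rw [← this]
    exact ⟨a, haB, hg a⟩⟩
  have hane : a ≠ 0 := by rintro rfl; simp at hap
  have han : 0 < ‖a‖ := norm_pos_iff.2 hane
  obtain ⟨σ, hσ, hσ1⟩ := exists_between (lt_min (lt_min hρ₁ hρ₂) han)
  rw [lt_min_iff, lt_min_iff] at hσ1
  have hcpt : IsCompact (B ∩ Metric.sphere 0 σ) := hB.cpt.inter_right Metric.isClosed_sphere
  obtain ⟨v, ⟨hvB, hvn⟩, hmin⟩ := hcpt.exists_isMinOn ⟨((σ / ‖a‖ : ℝ):ℂ) * a,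
    hB.smul (interior_subset haB) (by positivity) (by rw [div_le_one han]; exact hσ1.2.le), by
      simp [abs_of_pos hσ, han.ne']⟩ Complex.continuous_re.continuousOn
  simp at hvn
  have hv0 : v ≠ 0 := by rintro rfl; simp at hvn; linarith
  have hvp := hB.pos v hvB hv0
  have m1 : r * v ∈ B := by
    have hn : ‖r * v‖ = σ := by simp [hr1, hvn]
    rw [← e1 _ (by rw [hn]; exact hσ1.1.1), e2 _ (by rw [hn]; exact hσ1.1.2)]
    exact ⟨v, hvB, hg v⟩
  have m2 : star r * v ∈ B := by
    rw [← e1 _ (by rw [hvn]; exact hσ1.1.1), e2 _ (by rw [hvn]; exact hσ1.1.2)] at hvB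
    obtain ⟨b, hb, hbe⟩ := hvB
    rw [← hbe, hg, ← mul_assoc, mul_comm (star r), hrr, one_mul]
    exact hb
  have n1 : v.re ≤ (r * v).re := hmin ⟨m1, by simp [hr1, hvn]⟩
  have n2 : v.re ≤ (star r * v).re := hmin ⟨m2, by simp [hr1, hvn]⟩
  simp at n1 n2
  nlinarith

lemma diam_normal {K : Set ℂ} (hc : IsCompact K) (hconv : Convex ℝ K) (hi : (interior K).Nonempty) :
    ∃ (f : ℂ ≃ᵢ ℂ) (D : ℝ), 0 < D ∧ (0:ℂ) ∈ f '' K ∧ (D:ℂ) ∈ f '' K ∧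
      (∀ a ∈ f '' K, ∀ b ∈ f '' K, ‖a - b‖ ≤ D) := by
  have hne : K.Nonempty := hi.mono interior_subset
  obtain ⟨⟨p, q⟩, ⟨hp, hq⟩, hmax⟩ := (hc.prod hc).exists_isMaxOn (hne.prod hne)
    (f := fun x : ℂ × ℂ => ‖x.1 - x.2‖) (by fun_prop)
  have hm : ∀ a ∈ K, ∀ b ∈ K, ‖a - b‖ ≤ ‖p - q‖ := fun a ha b hb => hmax (a := (a, b)) ⟨ha, hb⟩
  have hD : 0 < ‖p - q‖ := by
    obtain ⟨a, ha⟩ := hi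
    obtain ⟨t, ht, -, h⟩ := int_pert ha 1
    have := hm _ (interior_subset (h t ht.le le_rfl)) a (interior_subset ha)
    simp [abs_of_pos ht] at this
    linarith
  set D := ‖p - q‖
  have hDc : (D:ℂ) ≠ 0 := by exact_mod_cast hD.ne'
  let r : ℂ := star (p - q) / D
  have hr : ‖r‖ = 1 := by simp only [r, norm_div, norm_star, Complex.norm_real, Real.norm_of_nonneg hD.le]; exact div_self hD.ne'
  let rc : Circle := ⟨r, by simp [Submonoid.unitSphere, hr]⟩
  let f : ℂ ≃ᵢ ℂ := (IsometryEquiv.subLeft p).trans (rotation rc).toIsometryEquiv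
  have hf : ∀ z, f z = r * (p - z) := fun z => rfl
  refine ⟨f, D, hD, ⟨p, hp, by simp [hf]⟩, ⟨q, hq, ?_⟩, ?_⟩
  · rw [hf]
    have := Complex.mul_conj (p - q)
    rw [Complex.normSq_eq_norm_sq] at this
    have h2 : star (p - q) * (p - q) = (D:ℂ) ^ 2 := by
      rw [mul_comm]; simpa using this
    simp only [r]
    rw [div_mul_eq_mul_div, h2]
    field_simp
  · rintro _ ⟨a, ha, rfl⟩ _ ⟨b, hb, rfl⟩
    rw [← dist_eq_norm, f.isometry.dist_eq, dist_eq_norm]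
    exact hm a ha b hb

/-- in the normalized diametral position -/
lemma re_lt_of_norm {a : ℂ} {D : ℝ} (h : ‖a - D‖ ≤ D) (ha : a ≠ 0) (hD : 0 < D) : 0 < a.re := by
  have h1 : ‖a - D‖ ^ 2 ≤ D ^ 2 := by gcongr
  rw [← Complex.normSq_eq_norm_sq, Complex.normSq_apply] at h1
  have h2 := Complex.normSq_pos.2 ha
  rw [Complex.normSq_apply] at h2
  simp at h1
  by_contra! hc
  nlinarith [mul_nonneg hD.le (neg_nonneg.2 hc)]

lemma ex_of_diam {A : Set ℂ} (hconv : Convex ℝ A) (hc : IsCompact A) (hi : (interior A).Nonempty)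
    {D : ℝ} (hD : 0 < D) (h0 : (0:ℂ) ∈ A) (h1 : (D:ℂ) ∈ A) (h : ∀ a ∈ A, ∀ b ∈ A, ‖a - b‖ ≤ D) :
    Ex A :=
  ⟨hconv, hc, hi, h0, fun a ha hne => re_lt_of_norm (h a ha D h1) hne hD⟩

lemma not_twoMax {A : Set ℂ} 
    {D : ℝ} (h0 : (0:ℂ) ∈ A) (h1 : (D:ℂ) ∈ A) (h : ∀ a ∈ A, ∀ b ∈ A, ‖a - b‖ ≤ D) :
    ¬ TwoMax A := by
  have main : ∀ z ∈ A, (∀ a ∈ A, a.re ≤ z.re) → z = D := by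
    intro z hz hm
    have a1 := hm _ h1
    have a2 := h z hz 0 h0
    simp at a1 a2
    have hre := (Complex.re_le_norm z)
    have e : z.re = ‖z‖ := by linarith
    have e2 : z.re = D := by linarith
    have := Complex.sq_norm z
    rw [Complex.normSq_apply, ← e] at this
    apply Complex.ext
    · simpa using e2
    · simp; nlinarith
  rintro ⟨z₁, hz₁, z₂, hz₂, hne, m1, m2⟩
  exact hne ((main _ hz₁ m1).trans (main _ hz₂ m2).symm)

lemma main_C {K L : Set ℂ} (hKc : IsCompact K) (hKconv : Convex ℝ K) (hKi : (interior K).Nonempty)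
    (hLc : IsCompact L) (hLconv : Convex ℝ L) (hLi : (interior L).Nonempty) (hG : Good K L) :
    ∃ (r : ℝ) (f g : ℂ ≃ᵢ ℂ), 0 < r ∧ f '' K = Metric.closedBall 0 r ∧ g '' L = Metric.closedBall 0 r := by
  obtain ⟨f, D, hD, hA0, hAD, hAd⟩ := diam_normal hKc hKconv hKi
  obtain ⟨g₀, D', hD', hB0, hBD, hBd⟩ := diam_normal hLc hLconv hLi
  have hA := ex_of_diam (iso_conv hKconv f) (hKc.image f.continuous) (iso_int hKi f) hD hA0 hAD hAd
  have hB := ex_of_diam (iso_conv hLconv g₀) (hLc.image g₀.continuous) (iso_int hLi g₀) hD' hB0 hBD hBd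
  obtain ⟨g, hB0, hBD, hBd, hi⟩ : ∃ g : ℂ ≃ᵢ ℂ, (0:ℂ) ∈ g '' L ∧ (D':ℂ) ∈ g '' L ∧
      (∀ a ∈ g '' L, ∀ b ∈ g '' L, ‖a - b‖ ≤ D') ∧ (interior (f '' K ∩ g '' L)).Nonempty := by
    let g₁ := g₀.trans Complex.conjLIE.toIsometryEquiv
    have e : Complex.conjLIE.toIsometryEquiv '' (g₀ '' L) = g₁ '' L := by
      rw [← Set.image_comp]; rfl
    have k0 : (0:ℂ) ∈ g₁ '' L := by rw [← e]; exact ⟨0, hB0, by simp⟩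
    have k1 : (D':ℂ) ∈ g₁ '' L := by rw [← e]; exact ⟨D', hBD, by simp⟩
    have k2 : (∀ a ∈ g₁ '' L, ∀ b ∈ g₁ '' L, ‖a - b‖ ≤ D') := by
      rw [← e]
      rintro _ ⟨a, ha, rfl⟩ _ ⟨b, hb, rfl⟩
      rw [← dist_eq_norm, IsometryEquiv.dist_eq, dist_eq_norm]
      exact hBd a ha b hb
    have k3 := ex_of_diam (iso_conv hLconv g₁) (hLc.image g₁.continuous) (iso_int hLi g₁) hD' k0 k1 k2
    rw [← e] at k3
    rcases stepA hA hB hD hD' hAD hBD k3 with h | h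
    · exact ⟨g₀, hB0, hBD, hBd, h⟩
    · rw [e] at h
      exact ⟨g₁, k0, k1, k2, h⟩
  have hB := ex_of_diam (iso_conv hLconv g) (hLc.image g.continuous) (iso_int hLi g) hD' hB0 hBD hBd
  have hGAB := hG.image f g
  have hsm := stepB hGAB hA hB hi
  have hnB := not_twoMax hB0 hBD hBd
  have hAB : f '' K = g '' L := by
    rcases key hA hB hGAB.tt hGAB.symm.tt hsm with h | h | h
    · exact h
    · exact absurd h (not_twoMax hA0 hAD hAd)
    · exact absurd h hnB
  clear hAD hAd hA0 hD
  -- center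
  obtain ⟨c, hc⟩ := hG f g hi
  rw [← hAB, Set.inter_self] at hc
  let s : ℂ ≃ᵢ ℂ := (IsometryEquiv.subRight (c/2))
  have hs : ∀ z, s z = z - c/2 := fun z => rfl
  set G : Set ℂ := (f.trans s) '' K with hGdef
  have hGL : G = (g.trans s) '' L := by
    simp only [hGdef, iso_coe_trans, Set.image_comp, hAB]
  have hGf : G = s '' (f '' K) := by simp only [hGdef, iso_coe_trans, Set.image_comp]
  have hneg : ∀ x ∈ G, -x ∈ G := by
    rw [hGf]
    rintro _ ⟨a, ha, rfl⟩
    exact ⟨c - a, hc a ha, by rw [hs, hs]; ring⟩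
  have hGd : ∀ a ∈ G, ∀ b ∈ G, ‖a - b‖ ≤ D' := by
    rw [hGf, hAB]
    rintro _ ⟨a, ha, rfl⟩ _ ⟨b, hb, rfl⟩
    rw [← dist_eq_norm, IsometryEquiv.dist_eq, dist_eq_norm]
    exact hBd a ha b hb
  have hGn : ∀ a ∈ G, ‖a‖ ≤ D'/2 := by
    intro a ha
    have := hGd a ha (-a) (hneg a ha)
    rw [sub_neg_eq_add, ← two_mul, norm_mul] at this
    simp at this
    linarith
  have hGconv : Convex ℝ G := iso_conv hKconv _
  have hGc : IsCompact G := hKc.image (f.trans s).continuous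
  have hGi : (interior G).Nonempty := iso_int hKi _
  have hsphere : ∀ z : ℂ, z ≠ 0 → ((D'/2 / ‖z‖ : ℝ) : ℂ) * z ∈ G := by
    intro z hz
    obtain ⟨x, hx, hmax⟩ := hGc.exists_isMaxOn (hGi.mono interior_subset)
      (f := fun g : ℂ => ‖g - z‖) (by fun_prop)
    have hmax : ∀ y ∈ G, ‖y - z‖ ≤ ‖x - z‖ := fun y hy => hmax hy
    have hxz : 0 < ‖x - z‖ := by
      by_contra! hcon
      obtain ⟨a, ha⟩ := hGi
      obtain ⟨t, ht, -, h⟩ := int_pert ha 1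
      have u1 := norm_le_zero_iff.1 ((hmax _ (interior_subset (h t ht.le le_rfl))).trans hcon)
      have u2 := norm_le_zero_iff.1 ((hmax _ (interior_subset ha)).trans hcon)
      have : (t:ℂ) = 0 := by linear_combination u1 - u2
      exact ht.ne' (by exact_mod_cast this)
    set N := ‖x - z‖
    have hNc : (N:ℂ) ≠ 0 := by exact_mod_cast hxz.ne'
    let r : ℂ := star (x - z) / N
    have hr : ‖r‖ = 1 := by simp only [r, norm_div, norm_star, Complex.norm_real, Real.norm_of_nonneg hxz.le]; exact div_self hxz.ne'
    let rc : Circle := ⟨r, by simp [Submonoid.unitSphere, hr]⟩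
    let k : ℂ ≃ᵢ ℂ := (IsometryEquiv.subLeft x).trans (rotation rc).toIsometryEquiv
    have hk : ∀ y, k y = r * (x - y) := fun y => rfl
    have hrr : r * (x - z) = N := by
      have := Complex.mul_conj (x - z)
      rw [Complex.normSq_eq_norm_sq] at this
      have h2 : star (x - z) * (x - z) = (N:ℂ) ^ 2 := by
        rw [mul_comm]; simpa using this
      simp only [r]
      rw [div_mul_eq_mul_div, h2]
      field_simp
    have hpos : ∀ y ∈ G, y ≠ x → 0 < (r * (x - y)).re := by
      intro y hy hne
      apply re_lt_of_norm (D := N) _ _ hxz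
      · rw [← hrr, ← mul_sub, norm_mul, hr, one_mul, show x - y - (x - z) = -(y - z) by ring, norm_neg]
        exact hmax y hy
      · have : r ≠ 0 := by intro h; simp [h] at hr
        exact mul_ne_zero this (sub_ne_zero.2 hne.symm)
    have hEx : Ex (k '' G) := by
      refine ⟨iso_conv hGconv k, hGc.image k.continuous, iso_int hGi k, ⟨x, hx, by simp [hk]⟩, ?_⟩
      rintro _ ⟨y, hy, rfl⟩ hne
      rw [hk] at hne ⊢
      exact hpos y hy (by rintro rfl; simp at hne)
    have hGG : Good (k '' G) (g '' L) := by
      have := hG.image ((f.trans s).trans k) g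
      rw [iso_coe_trans, Set.image_comp] at this
      exact this
    have hk2 : ¬ TwoMax (k '' G) := by
      have main : ∀ y ∈ G, (∀ a ∈ k '' G, a.re ≤ (k y).re) → y = -x := by
        intro y hy hm
        by_contra hne
        have h1 := hpos (-y) (hneg y hy) (by rintro h; apply hne; rw [← h]; simp)
        have h2 := hm (k (-x)) ⟨-x, hneg x hx, rfl⟩
        rw [hk, hk] at h2
        have : r * (x - -x) = r * (x - y) + r * (x - -y) := by ring
        rw [this, Complex.add_re] at h2
        linarith
      rintro ⟨_, ⟨y₁, hy₁, rfl⟩, _, ⟨y₂, hy₂, rfl⟩, hne, m1, m2⟩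
      exact hne (by rw [main y₁ hy₁ m1, main y₂ hy₂ m2])
    have hkG : k '' G = g '' L := by
      rcases key hEx hB hGG.tt hGG.symm.tt hsm with h | h | h
      · exact h
      · exact absurd h hk2
      · exact absurd h hnB
    rw [← hkG] at hBD
    obtain ⟨y, hy, hyD⟩ := hBD
    rw [hk] at hyD
    -- |x - y| = D'
    have hr0 : r ≠ 0 := by intro h; simp [h] at hr
    have hnorm : ‖x - y‖ = D' := by
      have := congrArg norm hyD
      rw [norm_mul, hr, one_mul, Complex.norm_real, Real.norm_of_nonneg hD'.le] at this
      exact this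
    have hxn := hGn x hx
    have hyn := hGn y hy
    have hyx : y = -x := by
      have hpl := parallelogram_law_with_norm ℝ x y
      rw [hnorm] at hpl
      have b1 : ‖x‖ * ‖x‖ ≤ D'/2 * (D'/2) := by gcongr
      have b2 : ‖y‖ * ‖y‖ ≤ D'/2 * (D'/2) := by gcongr
      have b3 : ‖x + y‖ * ‖x + y‖ ≤ 0 := by nlinarith
      have b4 : ‖x + y‖ = 0 := by nlinarith [norm_nonneg (x + y)]
      exact eq_neg_of_add_eq_zero_right (norm_eq_zero.1 b4)
    have hx2 : r * x = ((D'/2 : ℝ):ℂ) := by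
      rw [hyx] at hyD; push_cast; linear_combination hyD / 2
    set lam : ℝ := D'/2 - N
    have hzl : r * z = (lam : ℂ) := by
      simp only [lam]; push_cast at hx2 ⊢; linear_combination hx2 - hrr
    have hzn : ‖z‖ = |lam| := by
      have := congrArg norm hzl
      rw [norm_mul, hr, one_mul, Complex.norm_real] at this
      exact this
    have hl0 : lam ≠ 0 := by
      intro h
      rw [h] at hzn
      simp at hzn
      exact hz hzn
    rcases hl0.lt_or_gt with h | h
    · have : ((D'/2 / ‖z‖ : ℝ) : ℂ) * z = -x := by
        apply mul_left_cancel₀ hr0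
        rw [mul_left_comm, hzl, mul_neg, hx2, hzn, abs_of_neg h, ← Complex.ofReal_mul, ← Complex.ofReal_neg]
        congr 1
        field_simp
      rw [this]; exact hneg x hx
    · have : ((D'/2 / ‖z‖ : ℝ) : ℂ) * z = x := by
        apply mul_left_cancel₀ hr0
        rw [mul_left_comm, hzl, hx2, hzn, abs_of_pos h, ← Complex.ofReal_mul]
        congr 1
        field_simp
      rw [this]; exact hx
  have h0G : (0:ℂ) ∈ G := by
    have h1 := hsphere 1 one_ne_zero
    have := hGconv.midpoint_mem h1 (hneg _ h1)
    simpa [midpoint_self_neg] using this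
  have hball : G = Metric.closedBall 0 (D'/2) := by
    apply Set.Subset.antisymm
    · intro x hx; simpa using hGn x hx
    · intro z hz
      simp at hz
      by_cases hz0 : z = 0
      · rw [hz0]; exact h0G
      · have hzp := norm_pos_iff.2 hz0
        have := (hGconv.starConvex h0G).smul_mem (hsphere z hz0) (t := ‖z‖ / (D'/2)) (by positivity)
          (by rw [div_le_one (by positivity)]; exact hz)
        rw [Complex.real_smul, ← mul_assoc, ← Complex.ofReal_mul] at this
        have e : ‖z‖ / (D'/2) * (D'/2 / ‖z‖) = 1 := by field_simp
        rw [e] at this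
        simpa using this
  exact ⟨D'/2, f.trans s, g.trans s, by positivity, hball, hGL ▸ hball⟩

theorem stmt_14 (K L : Set (EuclideanSpace ℝ (Fin 2)))
    (hKc : IsCompact K) (hKconv : Convex ℝ K) (hKint : (interior K).Nonempty)
    (hLc : IsCompact L) (hLconv : Convex ℝ L) (hLint : (interior L).Nonempty)
    (h : ∀ φ ψ : EuclideanSpace ℝ (Fin 2) ≃ᵢ EuclideanSpace ℝ (Fin 2),
      (interior ((φ '' K) ∩ (ψ '' L))).Nonempty →
      CentrallySymmetric ((φ '' K) ∩ (ψ '' L))) :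
    ∃ (r : ℝ) (c₁ c₂ : EuclideanSpace ℝ (Fin 2)), 0 < r ∧
      K = closedBall c₁ r ∧ L = closedBall c₂ r := by
  let T : EuclideanSpace ℝ (Fin 2) ≃ₗᵢ[ℝ] ℂ := Complex.orthonormalBasisOneI.repr.symm
  let e : EuclideanSpace ℝ (Fin 2) ≃ᵢ ℂ := T.toIsometryEquiv
  have heT : ∀ x, e x = T x := fun x => rfl
  have hint : ∀ S : Set (EuclideanSpace ℝ (Fin 2)), interior (e '' S) = e '' interior S := by
    intro S
    exact (e.toHomeomorph.image_interior S).symm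
  have hcv : ∀ S : Set (EuclideanSpace ℝ (Fin 2)), Convex ℝ S → Convex ℝ (e '' S) := by
    intro S hS
    exact hS.linear_image T.toLinearEquiv.toLinearMap
  have hG : Good (e '' K) (e '' L) := by
    intro φ ψ hi
    have e1 : ∀ (φ : ℂ ≃ᵢ ℂ) (S : Set (EuclideanSpace ℝ (Fin 2))),
        φ '' (e '' S) = e '' (((e.trans φ).trans e.symm) '' S) := by
      intro φ S
      simp only [← Set.image_comp, iso_coe_trans]
      congr 1
      ext x
      simp
    rw [e1, e1, ← Set.image_inter e.injective] at hi ⊢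
    rw [hint] at hi
    obtain ⟨c, hc⟩ := h _ _ (Set.image_nonempty.1 hi)
    refine ⟨T ((2:ℝ) • c), ?_⟩
    rintro _ ⟨x, hx, rfl⟩
    refine ⟨(2:ℝ) • c - x, ?_, by rw [heT, heT, map_sub]⟩
    rw [hc]
    exact ⟨x, hx, rfl⟩
  obtain ⟨r, f, g, hr, h1, h2⟩ := main_C (hKc.image e.continuous) (hcv K hKconv)
    (by rw [hint]; exact hKint.image _) (hLc.image e.continuous) (hcv L hLconv)
    (by rw [hint]; exact hLint.image _) hG
  have fin : ∀ (f : ℂ ≃ᵢ ℂ) (S : Set (EuclideanSpace ℝ (Fin 2))), f '' (e '' S) = closedBall 0 r →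
      S = closedBall ((e.trans f).symm 0) r := by
    intro f S hS
    rw [← IsometryEquiv.image_closedBall, ← hS, ← Set.image_comp, ← Set.image_comp]
    have : (⇑(e.trans f).symm ∘ ⇑f ∘ ⇑e) = id := by
      ext1 x
      exact (e.trans f).symm_apply_apply x
    rw [Function.comp_assoc, this, Set.image_id]
  exact ⟨r, _, _, hr, fin f K h1, fin g L h2⟩
end
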